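/- arXiv:1806.07800 — 4 statements merged into one kernel-verified Lean document; each statement's English description precedes it below -/
import Mathlib

section
/- Let K and K1 be natural numbers with K1 ≤ K, and let σ be a permutation of {1,...,K1}. Consider the directed graph whose vertices are pairs (i, T) with i ∈ {1,...,K} and T ⊆ {1,...,K1}, subject to the constraint that i ∉ T whenever i ≤ K1, and with a directed edge from (i, T) to (i', T') if and only if i' ∈ T. Let S be the set of vertices consisting of (a) all pairs (σ(j), T) with j ∈ {1,...,K1} and T ⊆ {1,...,K1} \ {σ(1), σ(2), ..., σ(j)}, together with (b) all pairs (i, T) with K1 < i ≤ K and T ⊆ {1,...,K1}. Then the subgraph induced on S is acyclic; that is, there is no vertex v ∈ S such that the transitive closure of the edge relation restricted to S relates v to itself. -/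
/-!
Every edge `(i, T) → (i', T')` has `i' ∈ T`, so its head is a cache-aided user; thus the subfiles of
cache-less users have no incoming edges and lie on no cycle. On the remaining vertices, an edge out
of a subfile of user `σ j` cached by none of `σ 1, …, σ j` leads to a subfile of some `σ j'` with
`j < j'`, so the position in the order `σ` strictly increases along paths.
-/

open Relation

section AcyclicOn

variable {α β : Type*} {r : α → α → Prop} {S T : Set α}

/-- Acyclicity of the subgraph induced on `S` by the directed graph with edge relation `r`; a loop
counts as a cycle. -/
def IsAcyclicOn (r : α → α → Prop) (S : Set α) : Prop :=
  ∀ v ∈ S, ¬ TransGen (fun a b => a ∈ S ∧ b ∈ S ∧ r a b) v v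

theorem isAcyclicOn_of_forall_lt [Preorder β] (f : α → β)
    (hf : ∀ a ∈ S, ∀ b ∈ S, r a b → f a < f b) : IsAcyclicOn r S := by
  intro v _ hcycle
  have hlt : TransGen (· < ·) (f v) (f v) :=
    TransGen.lift f (fun a b ⟨ha, hb, hab⟩ => hf a ha b hb hab) v v hcycle
  rw [transGen_eq_self] at hlt
  exact lt_irrefl _ hlt

theorem IsAcyclicOn.union_of_forall_not (hS : IsAcyclicOn r S)
    (hT : ∀ a ∈ S ∪ T, ∀ b ∈ T, ¬ r a b) : IsAcyclicOn r (S ∪ T) := by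
  intro v _ hcycle
  have head_mem {a b : α} (h : a ∈ S ∪ T ∧ b ∈ S ∪ T ∧ r a b) : b ∈ S :=
    h.2.1.resolve_right fun hb => hT a h.1 b hb h.2.2
  have hv : v ∈ S := by
    obtain ⟨_, _, hlast⟩ := TransGen.tail'_iff.1 hcycle
    exact head_mem hlast
  have path_in_S {a b : α} (h : TransGen (fun a b => a ∈ S ∪ T ∧ b ∈ S ∪ T ∧ r a b) a b) :
      a ∈ S → TransGen (fun a b => a ∈ S ∧ b ∈ S ∧ r a b) a b := by
    induction h using TransGen.head_induction_on with
    | single hab => exact fun ha => .single ⟨ha, head_mem hab, hab.2.2⟩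
    | head hac _ ih => exact fun ha => .head ⟨ha, head_mem hac, hac.2.2⟩ (ih (head_mem hac))
  exact hS v hv (path_in_S hcycle hv)

end AcyclicOn

section SideInformation

variable {U ι : Type*}

/-- Edges of the side-information graph: the vertex `(i, T)` is the subfile of the file requested by
user `i` that is cached exactly at the users in `T`, and it points to every subfile requested by a
user who has it cached. -/
def SideInfoAdj (a b : U × Finset U) : Prop :=
  b.1 ∈ a.2

/-- The set `J_{d,σ}` for cache-aided users `C` listed in the order `σ j`, `j ∈ s`: subfiles of a
user `σ j` that neither this user nor any earlier one has cached. The list may repeat users or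
leave some out. -/
def orderedSubfiles [Preorder ι] (σ : ι → U) (s : Set ι) (C : Set U) : Set (U × Finset U) :=
  {v | ∃ j ∈ s, v.1 = σ j ∧ (v.2 : Set U) ⊆ C \ σ '' (s ∩ Set.Iic j)}

/-- The subfiles requested by the users outside the set `C` of cache-aided users. -/
def cachelessSubfiles (C : Set U) : Set (U × Finset U) :=
  {v | v.1 ∉ C ∧ (v.2 : Set U) ⊆ C}

theorem isAcyclicOn_orderedSubfiles [LinearOrder ι] (σ : ι → U) (s : Set ι) (C : Set U) :
    IsAcyclicOn SideInfoAdj (orderedSubfiles σ s C) := by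
  intro v hv
  have : Nonempty ι := ⟨hv.choose⟩
  choose! position hmem huser hcached using
    fun (v : U × Finset U) (hv : v ∈ orderedSubfiles σ s C) => hv
  refine isAcyclicOn_of_forall_lt position (fun a ha b hb hab => ?_) v hv
  by_contra! hle
  exact (hcached a ha hab).2 ⟨position b, ⟨hmem b hb, hle⟩, (huser b hb).symm⟩

theorem not_sideInfoAdj_of_mem_cachelessSubfiles {C : Set U} {a b : U × Finset U}
    (ha : (a.2 : Set U) ⊆ C) (hb : b ∈ cachelessSubfiles C) : ¬ SideInfoAdj a b :=
  fun hab => hb.1 (ha hab)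

theorem stmt_0_general [LinearOrder ι] (σ : ι → U) (s : Set ι) (C : Set U) :
    IsAcyclicOn SideInfoAdj (orderedSubfiles σ s C ∪ cachelessSubfiles C) := by
  refine (isAcyclicOn_orderedSubfiles σ s C).union_of_forall_not fun a ha b hb =>
    not_sideInfoAdj_of_mem_cachelessSubfiles ?_ hb
  rcases ha with ⟨_, _, _, hcached⟩ | ⟨_, hcached⟩
  · exact hcached.trans Set.sdiff_subset
  · exact hcached

end SideInformation

theorem mem_orderedSubfiles_union_cachelessSubfiles {K1 : ℕ} {σ : ℕ → ℕ} {v : ℕ × Finset ℕ}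
    (hcached : v.2 ⊆ Finset.Icc 1 K1)
    (hv : (∃ j ∈ Finset.Icc 1 K1, v.1 = σ j ∧
      v.2 ⊆ Finset.Icc 1 K1 \ Finset.image σ (Finset.Icc 1 j)) ∨ K1 < v.1) :
    v ∈ orderedSubfiles σ (Set.Icc 1 K1) (Set.Icc 1 K1) ∪ cachelessSubfiles (Set.Icc 1 K1) := by
  rcases hv with ⟨j, hj, huser, huncached⟩ | hcacheless
  · refine .inl ⟨j, Finset.mem_Icc.1 hj, huser, ?_⟩
    rw [← Finset.coe_subset, Finset.coe_sdiff, Finset.coe_image, Finset.coe_Icc,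
      Finset.coe_Icc] at huncached
    exact huncached.trans
      (Set.sdiff_subset_sdiff_right (Set.image_mono fun _ hk => ⟨hk.1.1, hk.2⟩))
  · exact .inr ⟨fun hmem => hcacheless.not_ge hmem.2, fun _ hk => Finset.mem_Icc.1 (hcached hk)⟩

/-- Lemma 1: the side-information graph restricted to the acyclic vertex set
`J_{d,σ}` enlarged by all subfiles requested by the cache-less users remains
acyclic. Vertices are pairs `(i, T)` with `i ∈ {1,…,K}`, `T ⊆ {1,…,K1}` and
`i ∉ T` whenever `i ≤ K1`; there is an edge from `(i, T)` to `(i', T')` iff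
`i' ∈ T`. -/
theorem stmt_0 (K K1 : ℕ) (hK1 : K1 ≤ K) (σ : ℕ → ℕ)
    (hσ : Set.BijOn σ (Set.Icc 1 K1) (Set.Icc 1 K1)) :
    ∀ v : ℕ × Finset ℕ,
      -- v is a vertex of the side-information graph
      (v.1 ∈ Finset.Icc 1 K ∧ v.2 ⊆ Finset.Icc 1 K1 ∧ (v.1 ≤ K1 → v.1 ∉ v.2)) →
      -- v belongs to the enlarged set S = J_{d,σ} ∪ A_d
      ((∃ j ∈ Finset.Icc 1 K1, v.1 = σ j ∧
          v.2 ⊆ Finset.Icc 1 K1 \ Finset.image σ (Finset.Icc 1 j)) ∨ K1 < v.1) →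
      -- then no cycle through v in the subgraph induced on S
      ¬ Relation.TransGen
          (fun a b : ℕ × Finset ℕ =>
            (a.1 ∈ Finset.Icc 1 K ∧ a.2 ⊆ Finset.Icc 1 K1 ∧ (a.1 ≤ K1 → a.1 ∉ a.2)) ∧
            ((∃ j ∈ Finset.Icc 1 K1, a.1 = σ j ∧
                a.2 ⊆ Finset.Icc 1 K1 \ Finset.image σ (Finset.Icc 1 j)) ∨ K1 < a.1) ∧
            (b.1 ∈ Finset.Icc 1 K ∧ b.2 ⊆ Finset.Icc 1 K1 ∧ (b.1 ≤ K1 → b.1 ∉ b.2)) ∧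
            ((∃ j ∈ Finset.Icc 1 K1, b.1 = σ j ∧
                b.2 ⊆ Finset.Icc 1 K1 \ Finset.image σ (Finset.Icc 1 j)) ∨ K1 < b.1) ∧
            b.1 ∈ a.2)
          v v := by
  intro v ⟨_, hcached, _⟩ hv hcycle
  exact stmt_0_general σ (Set.Icc 1 K1) (Set.Icc 1 K1) v
    (mem_orderedSubfiles_union_cachelessSubfiles hcached hv)
    (Relation.TransGen.mono (fun _ _ ⟨⟨_, ha, _⟩, ha', ⟨_, hb, _⟩, hb', hab⟩ =>
      ⟨mem_orderedSubfiles_union_cachelessSubfiles ha ha',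
        mem_orderedSubfiles_union_cachelessSubfiles hb hb', hab⟩) v v hcycle)
end

section
/- Let K1 > 0 and γ1 ∈ (0,1) be real numbers, let L̃ > 1 and let L be a real number with 0 < L ≤ L̃. Define the single-antenna delay T_{K1} := K1(1 − γ1)/(1 + K1γ1) and set K2 := (L̃ − 1)·T_{K1}. Then for every real l with 0 < l < L, max{ K1(1 − γ1)/(l·(1 + K1γ1)) , K2/(L − l) } ≥ T_{K1}·L̃/L, and equality holds at l = L/L̃. Hence the minimum over l ∈ (0, L) of max{ K1(1 − γ1)/(l·(1 + K1γ1)) , K2/(L − l) } equals T_{K1}·L̃/L. -/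
/-!
For `l ∈ (0, L)`, the value `(a + b) / L` is the mediant of `a / l` and `b / (L - l)`, so it never
exceeds the larger of the two; it is attained when `L` is split in proportion to the loads `a` and
`b`. With `T` the single-antenna delay, the loads are `a = T` and `b = (Lt - 1) * T`, so the best
split is `l = L / Lt`.
-/

open Set

section Mediant

variable {𝕜 : Type*} [Field 𝕜] [LinearOrder 𝕜] {a b c d : 𝕜}

theorem add_div_add_le_max_div_div [IsStrictOrderedRing 𝕜] (hc : 0 < c) (hd : 0 < d) :
    (a + b) / (c + d) ≤ max (a / c) (b / d) := by
  rw [div_le_iff₀ (add_pos hc hd), mul_add]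
  exact add_le_add ((div_le_iff₀ hc).mp (le_max_left _ _)) ((div_le_iff₀ hd).mp (le_max_right _ _))

theorem max_div_div_eq_add_div_add (hc : c ≠ 0) (hd : d ≠ 0) (hcd : c + d ≠ 0)
    (h : a * d = b * c) : max (a / c) (b / d) = (a + b) / (c + d) := by
  have hmediant : a / c = (a + b) / (c + d) := by
    rw [div_eq_div_iff hc hcd, mul_add, add_mul, h]
  rw [← (div_eq_div_iff hc hd).mpr h, max_self, hmediant]

end Mediant

section Split

variable {𝕜 : Type*} [Field 𝕜] [LinearOrder 𝕜] [IsStrictOrderedRing 𝕜] {a b l L : 𝕜}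

theorem add_div_le_max_div_div_sub (a b : 𝕜) (hl : l ∈ Ioo 0 L) :
    (a + b) / L ≤ max (a / l) (b / (L - l)) := by
  simpa only [add_sub_cancel] using
    add_div_add_le_max_div_div (a := a) (b := b) hl.1 (sub_pos.mpr hl.2)

theorem max_div_div_sub_eq_add_div (hl : l ∈ Ioo 0 L) (h : a * (L - l) = b * l) :
    max (a / l) (b / (L - l)) = (a + b) / L := by
  have hL : l + (L - l) ≠ 0 := by
    rw [add_sub_cancel]
    exact (hl.1.trans hl.2).ne'
  simpa only [add_sub_cancel] using
    max_div_div_eq_add_div_add hl.1.ne' (sub_pos.mpr hl.2).ne' hL h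

theorem isLeast_image_max_div_div_sub (hl : l ∈ Ioo 0 L) (h : a * (L - l) = b * l) :
    IsLeast ((fun x ↦ max (a / x) (b / (L - x))) '' Ioo 0 L) ((a + b) / L) :=
  ⟨⟨l, hl, max_div_div_sub_eq_add_div hl h⟩,
    forall_mem_image.mpr fun _ hx ↦ add_div_le_max_div_div_sub a b hx⟩

theorem stmt_5_general {Lt : 𝕜} (T : 𝕜) (hLt : 1 < Lt) (hL : 0 < L) :
    (∀ l : 𝕜, 0 < l → l < L → T * Lt / L ≤ max (T / l) ((Lt - 1) * T / (L - l))) ∧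
    max (T / (L / Lt)) ((Lt - 1) * T / (L - L / Lt)) = T * Lt / L ∧
    IsLeast ((fun l ↦ max (T / l) ((Lt - 1) * T / (L - l))) '' Ioo 0 L) (T * Lt / L) := by
  have hLt₀ : 0 < Lt := zero_lt_one.trans hLt
  have hload : T * Lt = T + (Lt - 1) * T := by ring
  have hmem : L / Lt ∈ Ioo 0 L := ⟨div_pos hL hLt₀, div_lt_self hL hLt⟩
  have hbalance : T * (L - L / Lt) = (Lt - 1) * T * (L / Lt) := by field_simp
  rw [hload]
  exact ⟨fun l hl hlL ↦ add_div_le_max_div_div_sub _ _ ⟨hl, hlL⟩,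
    max_div_div_sub_eq_add_div hmem hbalance, isLeast_image_max_div_div_sub hmem hbalance⟩

end Split

/-- Optimization of Eq. (46), converse of Theorem 3: with
`T = K1(1−γ1)/(1+K1γ1)` and `K2 = (L̃−1)T`, for every `l ∈ (0, L)`,
`max{K1(1−γ1)/(l(1+K1γ1)), K2/(L−l)} ≥ T·L̃/L`, with equality at `l = L/L̃`;
hence the minimum over `(0, L)` equals `T·L̃/L`. -/
theorem stmt_5 (K1 γ1 Lt L : ℝ) (hK1 : 0 < K1) (hγ1 : γ1 ∈ Set.Ioo (0 : ℝ) 1)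
    (hLt : 1 < Lt) (hL0 : 0 < L) (hLLt : L ≤ Lt) :
    (∀ l : ℝ, 0 < l → l < L →
      (K1 * (1 - γ1) / (1 + K1 * γ1)) * Lt / L ≤
        max (K1 * (1 - γ1) / (l * (1 + K1 * γ1)))
          (((Lt - 1) * (K1 * (1 - γ1) / (1 + K1 * γ1))) / (L - l))) ∧
    max (K1 * (1 - γ1) / ((L / Lt) * (1 + K1 * γ1)))
        (((Lt - 1) * (K1 * (1 - γ1) / (1 + K1 * γ1))) / (L - L / Lt)) =
      (K1 * (1 - γ1) / (1 + K1 * γ1)) * Lt / L ∧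
    IsLeast
      ((fun l : ℝ => max (K1 * (1 - γ1) / (l * (1 + K1 * γ1)))
          (((Lt - 1) * (K1 * (1 - γ1) / (1 + K1 * γ1))) / (L - l))) ''
        Set.Ioo 0 L)
      ((K1 * (1 - γ1) / (1 + K1 * γ1)) * Lt / L) := by
  simpa only [div_mul_eq_div_div_swap] using
    stmt_5_general (K1 * (1 - γ1) / (1 + K1 * γ1)) hLt hL0
end

section
/- Let K1 > 0 and γ1 ∈ (0,1) be real numbers, let L ≥ 2 be real, and let K2 ≥ L be a real number with γ1 ≥ L/K2. Define the single-antenna delay T_{K1} := K1(1 − γ1)/(1 + K1γ1). Then (L − 1)·T_{K1} ≤ K2, and T_{K1} + (K2 − (L − 1)·T_{K1})/L ≤ K2/(L − 1). -/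
/-!
As the number of cache-aided users grows, their single-antenna delay `T` increases towards the
finite limit `(1 - γ) / γ`. As a function of `T`, the delay of the combined system is affine with
slope `1 / L`, and it has the fixed point `T = K₂ / (L - 1)`. That point is also where the
`L - 1` spare streams, used for the whole time `T`, have served all the cache-less users. So both
claims amount to `T ≤ K₂ / (L - 1)`, which holds for every number of cache-aided users once the
limit `(1 - γ) / γ` is at most `K₂ / (L - 1)`.
-/

section CacheAidedDelay

variable {𝕜 : Type*} [Field 𝕜]

/-- The delay `T_K` of serving `K` users with normalized cache size `γ` from one antenna. -/
def singleAntennaDelay (K γ : 𝕜) : 𝕜 :=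
  K * (1 - γ) / (1 + K * γ)

/-- The delay achieved with `L` antennas when cache-aided users, whose single-antenna delay is `T`,
join `K₂` cache-less users: `L - 1` cache-less users are served at a time while the
cache-aided ones are being served, and `L` at a time afterwards. The formula is meaningful when
`(L - 1) * T ≤ K₂`. -/
def combinedDelay (L K₂ T : 𝕜) : 𝕜 :=
  T + (K₂ - (L - 1) * T) / L

theorem combinedDelay_sub_div {L : 𝕜} (hL₀ : L ≠ 0) (hL₁ : L ≠ 1) (K₂ T : 𝕜) :
    combinedDelay L K₂ T - K₂ / (L - 1) = (T - K₂ / (L - 1)) / L := by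
  have hL₁' : L - 1 ≠ 0 := sub_ne_zero.mpr hL₁
  unfold combinedDelay
  field_simp
  ring

variable [LinearOrder 𝕜] [IsStrictOrderedRing 𝕜]

theorem combinedDelay_le_div_iff {L : 𝕜} (hL : 1 < L) (K₂ T : 𝕜) :
    combinedDelay L K₂ T ≤ K₂ / (L - 1) ↔ T ≤ K₂ / (L - 1) := by
  have hL₀ : 0 < L := one_pos.trans hL
  rw [← sub_nonpos, combinedDelay_sub_div hL₀.ne' hL.ne', div_le_iff₀ hL₀, zero_mul, sub_nonpos]

theorem singleAntennaDelay_le_one_sub_div {K γ : 𝕜} (hK : 0 ≤ K) (hγ₀ : 0 < γ) (hγ₁ : γ ≤ 1) :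
    singleAntennaDelay K γ ≤ (1 - γ) / γ := by
  have hden : 0 < 1 + K * γ := by positivity
  rw [singleAntennaDelay, div_le_div_iff₀ hden hγ₀]
  linarith

theorem one_sub_div_le_div_sub_one {γ L K₂ : 𝕜} (hL : 1 < L) (hK₂ : 0 < K₂) (hγ : L / K₂ ≤ γ) :
    (1 - γ) / γ ≤ K₂ / (L - 1) := by
  have hL₀ : 0 < L := one_pos.trans hL
  have hγ₀ : 0 < γ := (div_pos hL₀ hK₂).trans_le hγ
  calc (1 - γ) / γ = γ⁻¹ - 1 := by rw [sub_div, one_div, div_self hγ₀.ne']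
    _ ≤ γ⁻¹ := sub_le_self _ zero_le_one
    _ ≤ (L / K₂)⁻¹ := inv_anti₀ (div_pos hL₀ hK₂) hγ
    _ = K₂ / L := inv_div L K₂
    _ ≤ K₂ / (L - 1) :=
      div_le_div_of_nonneg_left hK₂.le (sub_pos.mpr hL) (sub_le_self L zero_le_one)

theorem stmt_8_general {K₁ γ L K₂ : 𝕜} (hK₁ : 0 ≤ K₁) (hγ₀ : 0 < γ) (hγ₁ : γ ≤ 1) (hL : 1 < L)
    (hγL : (1 - γ) / γ ≤ K₂ / (L - 1)) :
    (L - 1) * singleAntennaDelay K₁ γ ≤ K₂ ∧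
      combinedDelay L K₂ (singleAntennaDelay K₁ γ) ≤ K₂ / (L - 1) := by
  have hT : singleAntennaDelay K₁ γ ≤ K₂ / (L - 1) :=
    (singleAntennaDelay_le_one_sub_div hK₁ hγ₀ hγ₁).trans hγL
  exact ⟨(le_div_iff₀' (sub_pos.mpr hL)).mp hT, (combinedDelay_le_div_iff hL K₂ _).mpr hT⟩

end CacheAidedDelay

/-- Corollary 3: with `K2 ≥ L` cache-less users and `γ1 ≥ L/K2`, setting
`T = K1(1−γ1)/(1+K1γ1)`, one has `(L−1)T ≤ K2` and the achievable delay
`T + (K2 − (L−1)T)/L` is at most `K2/(L−1)`. -/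
theorem stmt_8 (K1 γ1 L K2 : ℝ) (hK1 : 0 < K1) (hγ1 : γ1 ∈ Set.Ioo (0 : ℝ) 1)
    (hL : 2 ≤ L) (hK2 : L ≤ K2) (hγL : L / K2 ≤ γ1) :
    (L - 1) * (K1 * (1 - γ1) / (1 + K1 * γ1)) ≤ K2 ∧
    K1 * (1 - γ1) / (1 + K1 * γ1) +
        (K2 - (L - 1) * (K1 * (1 - γ1) / (1 + K1 * γ1))) / L ≤
      K2 / (L - 1) := by
  have hL₁ : 1 < L := one_lt_two.trans_le hL
  exact stmt_8_general hK1.le hγ1.1 hγ1.2.le hL₁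
    (one_sub_div_le_div_sub_one hL₁ (by linarith) hγL)
end

section
/- Let K1, K2 be positive real numbers, let L > 1 be real, and let γ1 ∈ (0,1) and γ2 ∈ [0, γ1) be real numbers satisfying K1(1 − γ1)/(1 + K1γ1) ≥ K2(1 − γ2)/(L − 1 + K2γ2). Then there exist real numbers L1 and L2 with L1 ≥ 1, L2 ≥ 0, and L1 + L2 = L, such that K1(1 − γ1)/(L1 + K1γ1) = K2(1 − γ2)/(L2 + K2γ2) = (K1(1 − γ1) + K2(1 − γ2))/(L + K1γ1 + K2γ2). -/
/-!
Within time `T > 0`, a group of `K` users with normalized cache size `γ` can be served by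
`K * (1 - γ) / T - K * γ` streams, and by no fewer. Take `T` to be the delay of Equation (12): the
needs of the two groups then add up to `L`. Moreover `T` is the mediant of the delay of group 1 on
one stream and the delay of group 2 on `L - 1` streams, so the regime condition puts it below the
former, and group 1 therefore needs at least one stream. Finally `γ2 * T ≤ 1 - γ2`, because group 1
caches at least as much per user as group 2, and so the need of group 2 is nonnegative.
-/

namespace StreamAllocation

variable {𝕜 : Type*} [Field 𝕜]

/-- The delay of a group of `K` users of normalized cache size `γ` that is served by `s` parallel
streams. Neither `K` nor `s` is required to be an integer. -/
def groupDelay (K γ s : 𝕜) : 𝕜 :=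
  K * (1 - γ) / (s + K * γ)

/-- The delay of Equation (12): that of two groups sharing `L` streams. -/
def jointDelay (K₁ K₂ L γ₁ γ₂ : 𝕜) : 𝕜 :=
  (K₁ * (1 - γ₁) + K₂ * (1 - γ₂)) / (L + K₁ * γ₁ + K₂ * γ₂)

/-- The number of streams with which a group of `K` users of normalized cache size `γ` has delay
`T`, obtained by solving `groupDelay K γ s = T` for `s`. -/
def streamsForDelay (K γ T : 𝕜) : 𝕜 :=
  K * (1 - γ) / T - K * γ

theorem groupDelay_streamsForDelay {K γ : 𝕜} (T : 𝕜) (hload : K * (1 - γ) ≠ 0) :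
    groupDelay K γ (streamsForDelay K γ T) = T := by
  rw [groupDelay, streamsForDelay, sub_add_cancel, div_div_cancel₀ hload]

theorem streamsForDelay_jointDelay_add {K₁ K₂ L γ₁ γ₂ : 𝕜}
    (hT : jointDelay K₁ K₂ L γ₁ γ₂ ≠ 0) :
    streamsForDelay K₁ γ₁ (jointDelay K₁ K₂ L γ₁ γ₂) +
      streamsForDelay K₂ γ₂ (jointDelay K₁ K₂ L γ₁ γ₂) = L := by
  have hload : K₁ * (1 - γ₁) + K₂ * (1 - γ₂) ≠ 0 := (div_ne_zero_iff.mp hT).1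
  rw [streamsForDelay, streamsForDelay, sub_add_sub_comm, ← add_div, jointDelay,
    div_div_cancel₀ hload]
  ring

variable [LinearOrder 𝕜] [IsStrictOrderedRing 𝕜]

theorem le_streamsForDelay_iff {K γ s T : 𝕜} (hT : 0 < T) (hs : 0 < s + K * γ) :
    s ≤ streamsForDelay K γ T ↔ T ≤ groupDelay K γ s := by
  rw [streamsForDelay, groupDelay, le_sub_iff_add_le, le_div_comm₀ hs hT]

theorem streamsForDelay_nonneg {K γ T : 𝕜} (hK : 0 ≤ K) (hT : 0 < T) (h : γ * T ≤ 1 - γ) :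
    0 ≤ streamsForDelay K γ T := by
  rw [streamsForDelay, sub_nonneg, le_div_iff₀ hT, mul_assoc]
  exact mul_le_mul_of_nonneg_left h hK

theorem add_div_add_le_of_div_le_div {a b c d : 𝕜} (hc : 0 < c) (hd : 0 < d)
    (h : b / d ≤ a / c) : (a + b) / (c + d) ≤ a / c := by
  rw [div_le_div_iff₀ hd hc] at h
  rw [div_le_div_iff₀ (add_pos hc hd) hc]
  linarith

theorem jointDelay_le_groupDelay {K₁ K₂ L γ₁ γ₂ s : 𝕜} (hs₁ : 0 < s + K₁ * γ₁)
    (hs₂ : 0 < L - s + K₂ * γ₂) (h : groupDelay K₂ γ₂ (L - s) ≤ groupDelay K₁ γ₁ s) :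
    jointDelay K₁ K₂ L γ₁ γ₂ ≤ groupDelay K₁ γ₁ s := by
  have hsplit : L + K₁ * γ₁ + K₂ * γ₂ = (s + K₁ * γ₁) + (L - s + K₂ * γ₂) := by ring
  rw [jointDelay, hsplit]
  exact add_div_add_le_of_div_le_div hs₁ hs₂ h

theorem mul_jointDelay_le_one_sub {K₁ K₂ L γ₁ γ₂ : 𝕜} (hK₁ : 0 ≤ K₁) (hL : 0 ≤ L)
    (hγ₂ : γ₂ ≤ 1) (hγ : γ₂ ≤ γ₁) (hpos : 0 < L + K₁ * γ₁ + K₂ * γ₂) :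
    γ₂ * jointDelay K₁ K₂ L γ₁ γ₂ ≤ 1 - γ₂ := by
  have hgap : 0 ≤ (1 - γ₂) * L + K₁ * (γ₁ - γ₂) :=
    add_nonneg (mul_nonneg (sub_nonneg.mpr hγ₂) hL) (mul_nonneg hK₁ (sub_nonneg.mpr hγ))
  rw [jointDelay, ← mul_div_assoc, div_le_iff₀ hpos]
  linarith

end StreamAllocation

open StreamAllocation in
theorem stmt_10_general {𝕜 : Type*} [Field 𝕜] [LinearOrder 𝕜] [IsStrictOrderedRing 𝕜]
    {K₁ K₂ L γ₁ γ₂ : 𝕜} (hK₁ : 0 < K₁) (hK₂ : 0 < K₂) (hL : 1 < L)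
    (hγ₁ : γ₁ < 1) (hγ₂ : 0 ≤ γ₂) (hγ : γ₂ ≤ γ₁)
    (hregime : groupDelay K₂ γ₂ (L - 1) ≤ groupDelay K₁ γ₁ 1) :
    ∃ L₁ L₂ : 𝕜, 1 ≤ L₁ ∧ 0 ≤ L₂ ∧ L₁ + L₂ = L ∧
      groupDelay K₁ γ₁ L₁ = groupDelay K₂ γ₂ L₂ ∧
      groupDelay K₂ γ₂ L₂ = jointDelay K₁ K₂ L γ₁ γ₂ := by
  have hload₁ : 0 < K₁ * (1 - γ₁) := mul_pos hK₁ (sub_pos.mpr hγ₁)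
  have hload₂ : 0 < K₂ * (1 - γ₂) := mul_pos hK₂ (sub_pos.mpr (hγ.trans_lt hγ₁))
  have hcache₁ : 0 ≤ K₁ * γ₁ := mul_nonneg hK₁.le (hγ₂.trans hγ)
  have hcache₂ : 0 ≤ K₂ * γ₂ := mul_nonneg hK₂.le hγ₂
  have hstreams : 0 < L + K₁ * γ₁ + K₂ * γ₂ := by linarith
  set T := jointDelay K₁ K₂ L γ₁ γ₂
  have hT : 0 < T := div_pos (add_pos hload₁ hload₂) hstreams
  have hdelay₁ := groupDelay_streamsForDelay T hload₁.ne'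
  have hdelay₂ := groupDelay_streamsForDelay T hload₂.ne'
  refine ⟨streamsForDelay K₁ γ₁ T, streamsForDelay K₂ γ₂ T, ?_, ?_,
    streamsForDelay_jointDelay_add hT.ne', hdelay₁.trans hdelay₂.symm, hdelay₂⟩
  · have hone : 0 < 1 + K₁ * γ₁ := by linarith
    exact (le_streamsForDelay_iff hT hone).mpr
      (jointDelay_le_groupDelay hone (by linarith) hregime)
  · exact streamsForDelay_nonneg hK₂.le hT <|
      mul_jointDelay_le_one_sub hK₁.le (by linarith) (hγ.trans hγ₁.le) hγ hstreams

/-- Stream-allocation equation (Eq. (16)) underlying Theorem 4: there is a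
split `L = L1 + L2` with `L1 ≥ 1`, `L2 ≥ 0` equalizing the two per-group
delays, whose common value is the homogeneous delay of Eq. (12). -/
theorem stmt_10 (K1 K2 L γ1 γ2 : ℝ) (hK1 : 0 < K1) (hK2 : 0 < K2) (hL : 1 < L)
    (hγ1 : γ1 ∈ Set.Ioo (0 : ℝ) 1) (hγ2 : γ2 ∈ Set.Ico (0 : ℝ) γ1)
    (hcond : K2 * (1 - γ2) / (L - 1 + K2 * γ2) ≤ K1 * (1 - γ1) / (1 + K1 * γ1)) :
    ∃ L1 L2 : ℝ, 1 ≤ L1 ∧ 0 ≤ L2 ∧ L1 + L2 = L ∧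
      K1 * (1 - γ1) / (L1 + K1 * γ1) = K2 * (1 - γ2) / (L2 + K2 * γ2) ∧
      K2 * (1 - γ2) / (L2 + K2 * γ2) =
        (K1 * (1 - γ1) + K2 * (1 - γ2)) / (L + K1 * γ1 + K2 * γ2) :=
  stmt_10_general hK1 hK2 hL hγ1.2 hγ2.1 hγ2.2.le hcond
end
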